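/- Let N ≥ 3 and 0 < m < (N-2)/N. Let u and v be two solutions of the fast diffusion equation on ℝ^N × (0,T), with initial values u₀ and v₀. If f = u₀ - v₀ belongs to L¹(ℝ^N) and f has compact support, then u(·,t) - v(·,t) ∈ L¹(ℝ^N) for every t ∈ [0,T); moreover sup_{t ∈ [0,T)} ∫_{ℝ^N} |u(x,t) - v(x,t)| dx < ∞, with a bound depending only on T, ‖f‖_{L¹} and the support of f. -/

import Mathlib

/-! The `L¹` norm of the difference of two solutions does not increase, so `C T F R = F` works.

For a cut-off `φ ≥ 0` put `h(t) = ∫ |u - v| φ`. Subtracting the equations, multiplying by the sign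
of `u - v` (which is the sign of `u ^ m - v ^ m`) and using Kato's inequality (`kato_direction`,
`kato_lapl`) gives `h' ≤ ∫ |u ^ m - v ^ m| Δφ`. Since nothing is assumed about the growth of `u`
and `v`, the right-hand side must be absorbed by `h` itself. Let `y` be the number with
`y ^ m = |u ^ m - v ^ m|`; then `y ≤ |u - v|`, and it suffices that `φ` satisfies
`y ^ m Δφ ≤ κ y φ + g` for all `y ≥ 0`, with `∫ g ≤ κ` (`deriv_bound`).

Such `φ` exist for every `κ > 0`, with `1 - κ ≤ φ ≤ 1` on any given ball (`exists_test`). In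
dimension `N = n + 2` and with `s = 1 + |x|²/ρ²`, take
`φ = s ^ (-n/2) * (1 - (ε s) ^ (n + 2))₊ ^ (k + 3)`. The power `s ^ (-n/2)` is superharmonic, and the
exponent `n + 2` turns the terms of `Δφ` linear in the derivatives of the cut-off nonpositive
(`radial_le`). The one remaining positive term is at most a multiple of
`ε ^ (1 + n (1 - m) / 2) φ ^ m / ρ²` when `k` is large (`tail_le`), and Young's inequality splits
`(y φ) ^ m` into a part linear in `y φ` and a constant. On the support of `φ`, of volume comparable to
`ρ ^ N ε ^ (-N/2)`, the constant integrates to a positive power of `ε`, for `ρ` fixed.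

Grönwall's lemma then gives `h(t) exp(-κ t) ≤ h(0) + 1 - exp(-κ t)` (`weighted_bound`). Letting
`κ → 0` bounds the integral of `|u - v|` over each ball by `∫ |u₀ - v₀|`, and the balls exhaust
the space. -/

open MeasureTheory Real Filter Topology RealInnerProductSpace

noncomputable section

abbrev Euc (N : ℕ) := EuclideanSpace ℝ (Fin N)

/-- Laplacian: trace of the second derivative. -/
def lapl {N : ℕ} (f : Euc N → ℝ) (x : Euc N) : ℝ :=
  ∑ i : Fin N, iteratedFDeriv ℝ 2 f x ![EuclideanSpace.single i 1, EuclideanSpace.single i 1]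

/-- The constant C* = 2m(N-2-mN)/(1-m). -/
def Cst (N : ℕ) (m : ℝ) : ℝ := 2 * m * ((N : ℝ) - 2 - m * N) / (1 - m)

/-- β = N/(N-2-Nm). -/
def betaC (N : ℕ) (m : ℝ) : ℝ := (N : ℝ) / ((N : ℝ) - 2 - N * m)

/-- γ = -β/N. -/
def gammaC (N : ℕ) (m : ℝ) : ℝ := -betaC N m / N

/-- Barenblatt solution with extinction time T. -/
def Bb (N : ℕ) (m T k : ℝ) (x : Euc N) (t : ℝ) : ℝ :=
  (Cst N m * (T - t) / (k * (T - t) ^ (2 * gammaC N m) + ‖x‖ ^ 2)) ^ (1 / (1 - m))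

/-- Rescaled Barenblatt profile. -/
def BbTil (N : ℕ) (m k : ℝ) (x : Euc N) : ℝ :=
  (Cst N m / (k + ‖x‖ ^ 2)) ^ (1 / (1 - m))

/-- u is a solution of the fast diffusion equation on ℝ^N × (0,T) with initial value u₀. -/
def IsFDESol (N : ℕ) (m T : ℝ) (u : Euc N → ℝ → ℝ) (u₀ : Euc N → ℝ) : Prop :=
  (∀ x : Euc N, ∀ t ∈ Set.Ioo (0:ℝ) T, 0 < u x t) ∧
  ContDiffOn ℝ (⊤ : ℕ∞) (fun p : Euc N × ℝ => u p.1 p.2) (Set.univ ×ˢ Set.Ioo (0:ℝ) T) ∧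
  ContinuousOn (fun p : Euc N × ℝ => u p.1 p.2) (Set.univ ×ˢ Set.Ico (0:ℝ) T) ∧
  (∀ x, u x 0 = u₀ x) ∧
  (∀ x : Euc N, ∀ t ∈ Set.Ioo (0:ℝ) T,
    deriv (fun s => u x s) t = lapl (fun y => u y t ^ m) x)

/-- Rescaled solution ũ(x,τ) = (T-t)^(-β) u(x (T-t)^γ, t), τ = -log(T-t). -/
def rescaleSol (N : ℕ) (m T : ℝ) (u : Euc N → ℝ → ℝ) (x : Euc N) (τ : ℝ) : ℝ :=
  Real.exp (betaC N m * τ) * u (Real.exp (-gammaC N m * τ) • x) (T - Real.exp (-τ))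

/-- f is radially symmetric. -/
def IsRadial {N : ℕ} (f : Euc N → ℝ) : Prop := ∀ x y : Euc N, ‖x‖ = ‖y‖ → f x = f y

/-! ### Second difference quotients and Kato's inequality -/

/-- The pure second directional derivative `D²f(x)(e,e)`. -/
def d2 {N : ℕ} (f : Euc N → ℝ) (x e : Euc N) : ℝ := iteratedFDeriv ℝ 2 f x ![e, e]

lemma d2_eq {N : ℕ} (f : Euc N → ℝ) (x e : Euc N) :
    d2 f x e = fderiv ℝ (fderiv ℝ f) x e e := by
  simp [d2, iteratedFDeriv_two_apply]

lemma continuous_d2 {N : ℕ} {f : Euc N → ℝ} (hf : ContDiff ℝ 2 f) (e : Euc N) :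
    Continuous fun x => d2 f x e := by
  simp only [d2_eq]
  have h1 : ContDiff ℝ 1 (fderiv ℝ f) := hf.fderiv_right (by norm_num)
  have h2 : Continuous (fderiv ℝ (fderiv ℝ f)) := h1.continuous_fderiv (by norm_num)
  fun_prop

lemma hasDerivAt_line {N : ℕ} (x e : Euc N) (s : ℝ) :
    HasDerivAt (fun s : ℝ => x + s • e) e s := by
  simpa using ((hasDerivAt_id s).smul_const e).const_add x

lemma hasDerivAt_line₁ {N : ℕ} {f : Euc N → ℝ} (hf : ContDiff ℝ 2 f) (x e : Euc N) (s : ℝ) :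
    HasDerivAt (fun s : ℝ => f (x + s • e)) (fderiv ℝ f (x + s • e) e) s :=
  ((hf.differentiable (by norm_num)) _).hasFDerivAt.comp_hasDerivAt s (hasDerivAt_line x e s)

lemma hasDerivAt_line₂ {N : ℕ} {f : Euc N → ℝ} (hf : ContDiff ℝ 2 f) (x e : Euc N) (s : ℝ) :
    HasDerivAt (fun s : ℝ => fderiv ℝ f (x + s • e) e) (d2 f (x + s • e) e) s := by
  have h1 : ContDiff ℝ 1 (fderiv ℝ f) := hf.fderiv_right (by norm_num)
  have h2 := ((h1.differentiable (by norm_num)) (x + s • e)).hasFDerivAt.comp_hasDerivAt s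
    (hasDerivAt_line x e s)
  rw [d2_eq]
  simpa using h2.clm_apply (hasDerivAt_const s e)

/-- Symmetric second difference quotient of `f` at `x` in the direction `e` with step `h`. -/
def diff2 {N : ℕ} (f : Euc N → ℝ) (e : Euc N) (h : ℝ) (x : Euc N) : ℝ :=
  (f (x + h • e) + f (x - h • e) - 2 * f x) / h ^ 2

/-- Mean value estimate: the second difference quotient deviates from a number `c` by at most
twice the deviation of `D²f(e,e)` from `c` on the segment. -/
lemma abs_diff2_sub_le {N : ℕ} {f : Euc N → ℝ} (hf : ContDiff ℝ 2 f) (x e : Euc N) {h c M : ℝ}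
    (hh : 0 < h) (hM : ∀ s, |s| ≤ h → |d2 f (x + s • e) e - c| ≤ M) :
    |diff2 f e h x - c| ≤ 2 * M := by
  set G : ℝ → ℝ := fun s => f (x + s • e) + f (x + (-s) • e) - c * s ^ 2 with hG
  set G1 : ℝ → ℝ := fun s => fderiv ℝ f (x + s • e) e - fderiv ℝ f (x + (-s) • e) e - 2 * c * s
    with hG1
  have dG : ∀ s, HasDerivAt G (G1 s) s := by
    intro s
    have h1 := hasDerivAt_line₁ hf x e s
    have h2 := (hasDerivAt_line₁ hf x e (-s)).comp s (hasDerivAt_neg s)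
    have h3 := ((hasDerivAt_id s).pow 2).const_mul c
    refine ((h1.add h2).sub h3).congr_deriv ?_
    simp [hG1]; ring
  have dG1 : ∀ s, HasDerivAt G1 ((d2 f (x + s • e) e - c) + (d2 f (x + (-s) • e) e - c)) s := by
    intro s
    have h1 := hasDerivAt_line₂ hf x e s
    have h2 := (hasDerivAt_line₂ hf x e (-s)).comp s (hasDerivAt_neg s)
    have h3 := (hasDerivAt_id s).const_mul (2 * c)
    refine ((h1.sub h2).sub h3).congr_deriv ?_
    simp
    ring
  have M0 : 0 ≤ M := (abs_nonneg _).trans (hM 0 (by simpa using hh.le))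
  have hG1b : ∀ s ∈ Set.Icc 0 h, |G1 s| ≤ 2 * M * h := by
    intro s hs
    have := (convex_Icc (0 : ℝ) h).norm_image_sub_le_of_norm_hasDerivWithin_le (C := 2 * M)
      (fun t _ => (dG1 t).hasDerivWithinAt) (fun t ht => by
        have a := hM t (by rw [abs_of_nonneg ht.1]; exact ht.2)
        have b := hM (-t) (by rw [abs_neg, abs_of_nonneg ht.1]; exact ht.2)
        rw [Real.norm_eq_abs]
        exact (abs_add_le _ _).trans (by linarith)) (Set.left_mem_Icc.2 hh.le) hs
    have z : G1 0 = 0 := by simp [hG1]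
    rw [z, sub_zero, sub_zero, Real.norm_eq_abs, Real.norm_eq_abs, abs_of_nonneg hs.1] at this
    exact this.trans (by gcongr; exact hs.2)
  -- `(G h - G 0) / h ^ 2` is the second difference quotient minus `c`
  have key := (convex_Icc (0 : ℝ) h).norm_image_sub_le_of_norm_hasDerivWithin_le (C := 2 * M * h)
      (fun t _ => (dG t).hasDerivWithinAt) hG1b (Set.left_mem_Icc.2 hh.le)
      (Set.right_mem_Icc.2 hh.le)
  have e1 : diff2 f e h x - c = (G h - G 0) / h ^ 2 := by
    simp only [diff2, hG]
    field_simp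
    simp [sub_eq_add_neg]
    ring
  rw [e1, abs_div, abs_of_pos (pow_pos hh 2), div_le_iff₀ (pow_pos hh 2)]
  rw [Real.norm_eq_abs, Real.norm_eq_abs, sub_zero, abs_of_pos hh] at key
  linarith [key, sq h]

lemma tendsto_diff2 {N : ℕ} {f : Euc N → ℝ} (hf : ContDiff ℝ 2 f) (x e : Euc N) :
    Tendsto (fun h => diff2 f e h x) (𝓝[>] 0) (𝓝 (d2 f x e)) := by
  rw [Metric.tendsto_nhds]
  intro ε hε
  have hc : Continuous fun s : ℝ => d2 f (x + s • e) e :=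
    (continuous_d2 hf e).comp (by fun_prop)
  have := Metric.continuous_iff.1 hc 0 (ε / 4) (by positivity)
  obtain ⟨δ, hδ, H⟩ := this
  filter_upwards [Ioo_mem_nhdsGT hδ] with h hh
  have := abs_diff2_sub_le hf x e (c := d2 f x e) (M := ε / 4) hh.1 (fun s hs => by
    have := H s (by rw [Real.dist_eq, sub_zero]; exact hs.trans_lt hh.2)
    simp only [zero_smul, add_zero, Real.dist_eq] at this
    exact this.le)
  rw [Real.dist_eq]
  linarith

/-- Second difference quotients with step at most one are uniformly bounded on compact sets. -/
lemma exists_bound_diff2 {N : ℕ} {f : Euc N → ℝ} (hf : ContDiff ℝ 2 f) (e : Euc N)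
    {K : Set (Euc N)} (hK : IsCompact K) :
    ∃ M, ∀ h ∈ Set.Ioo (0 : ℝ) 1, ∀ x ∈ K, |diff2 f e h x| ≤ M := by
  have hc : Continuous fun p : Euc N × ℝ => d2 f (p.1 + p.2 • e) e :=
    (continuous_d2 hf e).comp (by fun_prop)
  obtain ⟨M, hM⟩ := (hK.prod (isCompact_Icc (a := (-1 : ℝ)) (b := 1))).exists_bound_of_continuousOn
    hc.continuousOn
  refine ⟨2 * M, fun h hh x hx => ?_⟩
  have := abs_diff2_sub_le hf x e (c := 0) (M := M) hh.1 (fun s hs => by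
    have := hM (x, s) ⟨hx, abs_le.1 (hs.trans hh.2.le)⟩
    simpa using this)
  simpa using this

lemma continuous_diff2 {N : ℕ} {f : Euc N → ℝ} (hf : Continuous f) (e : Euc N) (h : ℝ) :
    Continuous (diff2 f e h) := by
  unfold diff2
  fun_prop

/-- Summation by parts for second difference quotients: translation invariance of the integral
moves them from `z` onto the compactly supported `φ`. -/
lemma diff2_sum {N : ℕ} {z φ : Euc N → ℝ} (hz : Continuous z) (hφ : Continuous φ)
    (hc : HasCompactSupport φ) (e : Euc N) (h : ℝ) :
    ∫ x, diff2 z e h x * φ x = ∫ x, z x * diff2 φ e h x := by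
  have i0 : Integrable fun x => z x * φ x :=
    (hz.mul hφ).integrable_of_hasCompactSupport hc.mul_left
  have i1 : ∀ a : Euc N, Integrable fun x => z (x + a) * φ x := fun a =>
    Continuous.integrable_of_hasCompactSupport (by fun_prop) hc.mul_left
  have hca : ∀ a : Euc N, HasCompactSupport fun x => φ (x + a) := fun a =>
    hc.comp_homeomorph (Homeomorph.addRight a)
  have i2 : ∀ a : Euc N, Integrable fun x => z x * φ (x + a) := fun a =>
    Continuous.integrable_of_hasCompactSupport (by fun_prop) (hca a).mul_left
  have tr : ∀ a : Euc N, ∫ x, z (x + a) * φ x = ∫ x, z x * φ (x - a) := by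
    intro a
    rw [← integral_add_right_eq_self (fun x => z x * φ (x - a)) a]
    simp
  have e1 : ∀ x, diff2 z e h x * φ x =
      (z (x + h • e) * φ x + z (x + -(h • e)) * φ x - 2 * (z x * φ x)) / h ^ 2 := by
    intro x; simp only [diff2, sub_eq_add_neg]; ring
  have e2 : ∀ x, z x * diff2 φ e h x =
      (z x * φ (x + -(h • e)) + z x * φ (x + h • e) - 2 * (z x * φ x)) / h ^ 2 := by
    intro x; simp only [diff2, sub_eq_add_neg]; ring
  simp only [e1, e2]
  have a1 := (i1 (h • e)).add (i1 (-(h • e)))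
  have a2 := (i2 (-(h • e))).add (i2 (h • e))
  simp only [Pi.add_def] at a1 a2
  rw [integral_div, integral_div, integral_sub a1 (i0.const_mul 2),
    integral_sub a2 (i0.const_mul 2), integral_add (i1 _) (i1 _),
    integral_add (i2 _) (i2 _), tr, tr]
  simp [sub_eq_add_neg]

/-- Kato's inequality in one direction, tested against `φ`. The factor `σ` is a choice of sign
of `z`; because `σ(x)` is a subgradient of the absolute value at `z(x)`, the inequality already
holds for second difference quotients, which can be moved onto `φ` by translation. -/
lemma kato_direction {N : ℕ} {z φ σ : Euc N → ℝ} (hz : ContDiff ℝ 2 z) (hφ : ContDiff ℝ 2 φ)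
    (hc : HasCompactSupport φ) (h0 : ∀ x, 0 ≤ φ x) (hσ : Measurable σ) (hσ1 : ∀ x, |σ x| ≤ 1)
    (hσz : ∀ x, σ x * z x = |z x|) (e : Euc N) :
    ∫ x, σ x * d2 z x e * φ x ≤ ∫ x, |z x| * d2 φ x e := by
  have hzc := hz.continuous
  have hφc := hφ.continuous
  have hIoo : Set.Ioo (0 : ℝ) 1 ∈ 𝓝[>] (0 : ℝ) := Ioo_mem_nhdsGT one_pos
  obtain ⟨M, hM⟩ := exists_bound_diff2 hz e hc
  have L1 : Tendsto (fun h => ∫ x, σ x * diff2 z e h x * φ x) (𝓝[>] 0)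
      (𝓝 (∫ x, σ x * d2 z x e * φ x)) := by
    refine tendsto_integral_filter_of_dominated_convergence (fun x => M * φ x) ?_ ?_ ?_ ?_
    · exact Eventually.of_forall fun h => ((hσ.mul (continuous_diff2 hzc e h).measurable).mul
        hφc.measurable).aestronglyMeasurable
    · filter_upwards [hIoo] with h hh
      refine Eventually.of_forall fun x => ?_
      rw [Real.norm_eq_abs, abs_mul, abs_mul, abs_of_nonneg (h0 x)]
      by_cases hx : x ∈ tsupport φ
      · have := hM h hh x hx
        refine mul_le_mul_of_nonneg_right ?_ (h0 x)
        calc |σ x| * |diff2 z e h x| ≤ 1 * |diff2 z e h x| :=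
              mul_le_mul_of_nonneg_right (hσ1 x) (abs_nonneg _)
          _ ≤ M := by linarith
      · simp [image_eq_zero_of_notMem_tsupport hx]
    · exact (hφc.integrable_of_hasCompactSupport hc).const_mul M
    · exact Eventually.of_forall fun x => ((tendsto_diff2 hz x e).const_mul _).mul_const _
  set K : Set (Euc N) := Metric.cthickening ‖e‖ (tsupport φ) with hKdef
  have hK : IsCompact K := hc.isCompact.cthickening
  obtain ⟨M', hM'⟩ := exists_bound_diff2 hφ e hK
  have L2 : Tendsto (fun h => ∫ x, |z x| * diff2 φ e h x) (𝓝[>] 0)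
      (𝓝 (∫ x, |z x| * d2 φ x e)) := by
    refine tendsto_integral_filter_of_dominated_convergence
      (K.indicator fun x => |z x| * M') ?_ ?_ ?_ ?_
    · exact Eventually.of_forall fun h =>
        (hzc.abs.mul (continuous_diff2 hφc e h)).aestronglyMeasurable
    · filter_upwards [hIoo] with h hh
      refine Eventually.of_forall fun x => ?_
      rw [Real.norm_eq_abs, abs_mul, abs_abs]
      by_cases hx : x ∈ K
      · rw [Set.indicator_of_mem hx]
        exact mul_le_mul_of_nonneg_left (hM' h hh x hx) (abs_nonneg _)
      · have out : ∀ a : Euc N, ‖a‖ ≤ ‖e‖ → φ (x + a) = 0 := by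
          intro a ha
          by_contra hne
          refine hx (Metric.mem_cthickening_of_dist_le x (x + a) _ _
            (subset_tsupport _ hne) ?_)
          simpa [dist_eq_norm] using ha
        have hhe : ‖h • e‖ ≤ ‖e‖ := by
          rw [norm_smul, Real.norm_eq_abs, abs_of_pos hh.1]
          exact mul_le_of_le_one_left (norm_nonneg _) hh.2.le
        have z1 := out (h • e) hhe
        have z2 := out (-(h • e)) (by rwa [norm_neg])
        have z3 := out 0 (by simp)
        rw [add_zero] at z3
        rw [← sub_eq_add_neg] at z2
        rw [Set.indicator_of_notMem hx]
        simp [diff2, z1, z2, z3]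
    · exact ((hzc.abs.mul continuous_const).continuousOn.integrableOn_compact hK).integrable_indicator
        hK.measurableSet
    · exact Eventually.of_forall fun x => (tendsto_diff2 hφ x e).const_mul _
  refine le_of_tendsto_of_tendsto L1 L2 ?_
  filter_upwards [self_mem_nhdsWithin] with h hh
  rw [← diff2_sum hzc.abs hφc hc]
  have J1 : Integrable fun x => diff2 z e h x * φ x :=
    ((continuous_diff2 hzc e h).mul hφc).integrable_of_hasCompactSupport hc.mul_left
  have J2 : Integrable fun x => diff2 (fun y => |z y|) e h x * φ x :=
    ((continuous_diff2 hzc.abs e h).mul hφc).integrable_of_hasCompactSupport hc.mul_left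
  have J3 : Integrable fun x => σ x * diff2 z e h x * φ x := by
    simp only [mul_assoc]
    exact J1.bdd_mul (c := 1) hσ.aestronglyMeasurable (Eventually.of_forall hσ1)
  refine integral_mono J3 J2 fun x => mul_le_mul_of_nonneg_right ?_ (h0 x)
  have sub : ∀ y, σ x * z y ≤ |z y| := fun y => by
    calc σ x * z y ≤ |σ x * z y| := le_abs_self _
      _ = |σ x| * |z y| := abs_mul _ _
      _ ≤ 1 * |z y| := mul_le_mul_of_nonneg_right (hσ1 x) (abs_nonneg _)
      _ = |z y| := one_mul _
  simp only [diff2]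
  rw [← mul_div_assoc]
  refine div_le_div_of_nonneg_right ?_ (sq_nonneg h)
  linarith [sub (x + h • e), sub (x - h • e), hσz x]

lemma lapl_eq_sum {N : ℕ} (f : Euc N → ℝ) (x : Euc N) :
    lapl f x = ∑ i : Fin N, d2 f x (EuclideanSpace.single i 1) := rfl

lemma continuous_lapl {N : ℕ} {f : Euc N → ℝ} (hf : ContDiff ℝ 2 f) : Continuous (lapl f) := by
  have : lapl f = fun x => ∑ i : Fin N, d2 f x (EuclideanSpace.single i 1) := rfl
  rw [this]
  exact continuous_finsetSum _ fun i _ => continuous_d2 hf _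

lemma hasCompactSupport_d2 {N : ℕ} {f : Euc N → ℝ} (hc : HasCompactSupport f) (e : Euc N) :
    HasCompactSupport fun x => d2 f x e := by
  refine ((hc.fderiv ℝ).fderiv ℝ).mono fun x hx => ?_
  rw [Function.mem_support, d2_eq] at hx
  rw [Function.mem_support]
  intro h
  exact hx (by simp [h])

/-- Kato's inequality `∫ sgn(z) (Δz) φ ≤ ∫ |z| Δφ`, by summing `kato_direction` over the
coordinate directions. -/
lemma kato_lapl {N : ℕ} {z φ σ : Euc N → ℝ} (hz : ContDiff ℝ 2 z) (hφ : ContDiff ℝ 2 φ)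
    (hc : HasCompactSupport φ) (h0 : ∀ x, 0 ≤ φ x) (hσ : Measurable σ) (hσ1 : ∀ x, |σ x| ≤ 1)
    (hσz : ∀ x, σ x * z x = |z x|) :
    Integrable (fun x => |z x| * lapl φ x) ∧
    ∫ x, σ x * lapl z x * φ x ≤ ∫ x, |z x| * lapl φ x := by
  have I1 : ∀ i : Fin N, Integrable fun x => σ x * d2 z x (EuclideanSpace.single i 1) * φ x := by
    intro i
    simp only [mul_assoc]
    exact (((continuous_d2 hz _).mul hφ.continuous).integrable_of_hasCompactSupport
      hc.mul_left).bdd_mul (c := 1) hσ.aestronglyMeasurable (Eventually.of_forall hσ1)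
  have I2 : ∀ i : Fin N, Integrable fun x => |z x| * d2 φ x (EuclideanSpace.single i 1) :=
    fun i => (hz.continuous.abs.mul (continuous_d2 hφ _)).integrable_of_hasCompactSupport
      (hasCompactSupport_d2 hc _).mul_left
  simp only [lapl_eq_sum, Finset.mul_sum, Finset.sum_mul]
  refine ⟨integrable_finsetSum _ fun i _ => I2 i, ?_⟩
  rw [integral_finsetSum _ fun i _ => I1 i, integral_finsetSum _ fun i _ => I2 i]
  exact Finset.sum_le_sum fun i _ => kato_direction hz hφ hc h0 hσ hσ1 hσz _

/-! ### The truncated power -/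

/-- The truncated power `y₊ ^ k`. -/
def pp (k : ℕ) (y : ℝ) : ℝ := max y 0 ^ k

lemma pp_nonneg (k : ℕ) (y : ℝ) : 0 ≤ pp k y := pow_nonneg (le_max_right _ _) _

lemma continuous_pp (k : ℕ) : Continuous (pp k) := by unfold pp; fun_prop

lemma hasDerivAt_pp (k : ℕ) (y : ℝ) :
    HasDerivAt (pp (k + 2)) (((k : ℝ) + 2) * pp (k + 1) y) y := by
  have main : ∀ y, y ≠ 0 → HasDerivAt (pp (k + 2)) (((k : ℝ) + 2) * pp (k + 1) y) y := by
    intro y hy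
    rcases lt_or_gt_of_ne hy with h | h
    · have e : pp (k + 2) =ᶠ[𝓝 y] fun _ => 0 := by
        filter_upwards [gt_mem_nhds h] with a ha
        simp [pp, max_eq_right (le_of_lt ha)]
      refine ((hasDerivAt_const y (0 : ℝ)).congr_of_eventuallyEq e).congr_deriv ?_
      simp [pp, max_eq_right h.le]
    · have e : pp (k + 2) =ᶠ[𝓝 y] fun a => a ^ (k + 2) := by
        filter_upwards [lt_mem_nhds h] with a ha
        simp [pp, max_eq_left (le_of_lt ha)]
      refine ((hasDerivAt_pow (k + 2) y).congr_of_eventuallyEq e).congr_deriv ?_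
      simp [pp, max_eq_left h.le]
  by_cases hy : y = 0
  · subst hy
    exact hasDerivAt_of_hasDerivAt_of_ne (fun y hy => main y hy)
      (continuous_pp _).continuousAt ((continuous_pp _).continuousAt.const_mul _)
  · exact main y hy

lemma contDiff_pp (k : ℕ) : ContDiff ℝ 2 (pp (k + 3)) := by
  have d1 : ∀ j : ℕ, deriv (pp (j + 2)) = fun y => ((j : ℝ) + 2) * pp (j + 1) y := fun j =>
    funext fun y => (hasDerivAt_pp j y).deriv
  have c1 : ∀ j : ℕ, ContDiff ℝ 1 (pp (j + 2)) := fun j =>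
    contDiff_one_iff_deriv.2 ⟨fun y => (hasDerivAt_pp j y).differentiableAt, by
      rw [d1]; exact (continuous_pp _).const_mul _⟩
  have : (2 : WithTop ℕ∞) = 1 + 1 := by norm_num
  rw [this, contDiff_succ_iff_deriv]
  refine ⟨fun y => (hasDerivAt_pp (k + 1) y).differentiableAt, by simp, ?_⟩
  rw [d1 (k + 1)]
  exact contDiff_const.mul (c1 k)

/-! ### Test functions -/

/-- Radial profile of the test function in the variable `s = 1 + |x|²/ρ²`, in dimension `n + 2`:
the superharmonic power `s ^ (-n/2)`, cut off at `s = 1/ε`. -/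
def prof (n k : ℕ) (ε s : ℝ) : ℝ := s ^ (-((n : ℝ) / 2)) * pp (k + 3) (1 - (ε * s) ^ (n + 2))

/-- First derivative of `prof`. -/
def prof1 (n k : ℕ) (ε s : ℝ) : ℝ :=
  -((n : ℝ) / 2) * s ^ (-((n : ℝ) / 2) - 1) * pp (k + 3) (1 - (ε * s) ^ (n + 2)) -
    s ^ (-((n : ℝ) / 2)) * (((k : ℝ) + 3) * (((n : ℝ) + 2) * ε * (ε * s) ^ (n + 1)) *
      pp (k + 2) (1 - (ε * s) ^ (n + 2)))

/-- Second derivative of `prof`. -/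
def prof2 (n k : ℕ) (ε s : ℝ) : ℝ :=
  (n : ℝ) / 2 * ((n : ℝ) / 2 + 1) * s ^ (-((n : ℝ) / 2) - 1 - 1) *
      pp (k + 3) (1 - (ε * s) ^ (n + 2)) +
    n * s ^ (-((n : ℝ) / 2) - 1) * (((k : ℝ) + 3) * (((n : ℝ) + 2) * ε * (ε * s) ^ (n + 1)) *
      pp (k + 2) (1 - (ε * s) ^ (n + 2))) -
    s ^ (-((n : ℝ) / 2)) * (((k : ℝ) + 3) * (((n : ℝ) + 2) * ((n : ℝ) + 1) * ε ^ 2 *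
      (ε * s) ^ n) * pp (k + 2) (1 - (ε * s) ^ (n + 2))) +
    s ^ (-((n : ℝ) / 2)) * (((k : ℝ) + 3) * ((k : ℝ) + 2) *
      (((n : ℝ) + 2) * ε * (ε * s) ^ (n + 1)) ^ 2 * pp (k + 1) (1 - (ε * s) ^ (n + 2)))

lemma hasDerivAt_cut (n : ℕ) (ε s : ℝ) :
    HasDerivAt (fun s : ℝ => 1 - (ε * s) ^ (n + 2)) (-(((n : ℝ) + 2) * ε * (ε * s) ^ (n + 1))) s := by
  refine ((((hasDerivAt_id s).const_mul ε).pow (n + 2)).const_sub 1).congr_deriv ?_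
  simp
  ring

lemma hasDerivAt_prof (n k : ℕ) (ε : ℝ) {s : ℝ} (hs : 0 < s) :
    HasDerivAt (prof n k ε) (prof1 n k ε s) s := by
  have h1 := Real.hasDerivAt_rpow_const (p := -((n : ℝ) / 2)) (Or.inl hs.ne')
  have h2 := (hasDerivAt_pp (k + 1) (1 - (ε * s) ^ (n + 2))).comp s (hasDerivAt_cut n ε s)
  refine (h1.mul h2).congr_deriv ?_
  simp only [prof1, Function.comp]
  push_cast
  ring

lemma hasDerivAt_prof1 (n k : ℕ) (ε : ℝ) {s : ℝ} (hs : 0 < s) :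
    HasDerivAt (prof1 n k ε) (prof2 n k ε s) s := by
  have h0 := Real.hasDerivAt_rpow_const (p := -((n : ℝ) / 2)) (Or.inl hs.ne')
  have h1 := Real.hasDerivAt_rpow_const (p := -((n : ℝ) / 2) - 1) (Or.inl hs.ne')
  have h2 := (hasDerivAt_pp (k + 1) (1 - (ε * s) ^ (n + 2))).comp s (hasDerivAt_cut n ε s)
  have h3 := (hasDerivAt_pp k (1 - (ε * s) ^ (n + 2))).comp s (hasDerivAt_cut n ε s)
  have h4 := ((((hasDerivAt_id s).const_mul ε).pow (n + 1)).const_mul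
    (((n : ℝ) + 2) * ε)).const_mul ((k : ℝ) + 3)
  refine (((h1.const_mul (-((n : ℝ) / 2))).mul h2).sub (h0.mul (h4.mul h3))).congr_deriv ?_
  simp only [prof2, Function.comp]
  push_cast
  simp
  ring

/-- The radial Laplacian of the profile: the power `s ^ (-n/2)` contributes a nonpositive term,
and the exponent `n + 2` in the cut-off makes the mixed terms nonpositive as well. -/
lemma radial_le (n k : ℕ) {ε s : ℝ} (hε : 0 < ε) (hs : 1 ≤ s) :
    4 * (s - 1) * prof2 n k ε s + 2 * ((n : ℝ) + 2) * prof1 n k ε s ≤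
      4 * ((k : ℝ) + 3) ^ 2 * ((n : ℝ) + 2) ^ 2 * ε *
        (s ^ (-((n : ℝ) / 2)) * (ε * s) ^ (2 * n + 3) * pp (k + 1) (1 - (ε * s) ^ (n + 2))) := by
  have s0 : 0 < s := by linarith
  have e1 : s ^ (-((n : ℝ) / 2) - 1) = s ^ (-((n : ℝ) / 2)) / s := rpow_sub_one s0.ne' _
  have e2 : s ^ (-((n : ℝ) / 2) - 1 - 1) = s ^ (-((n : ℝ) / 2)) / s / s := by
    rw [rpow_sub_one s0.ne', e1]
  have hA : 0 < s ^ (-((n : ℝ) / 2)) := rpow_pos_of_pos s0 _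
  have h0 := pp_nonneg (k + 3) (1 - (ε * s) ^ (n + 2))
  have h1 := pp_nonneg (k + 2) (1 - (ε * s) ^ (n + 2))
  have h2 := pp_nonneg (k + 1) (1 - (ε * s) ^ (n + 2))
  simp only [prof2, prof1, e1, e2]
  generalize pp (k + 3) (1 - (ε * s) ^ (n + 2)) = P0 at *
  generalize pp (k + 2) (1 - (ε * s) ^ (n + 2)) = P1 at *
  generalize pp (k + 1) (1 - (ε * s) ^ (n + 2)) = P2 at *
  generalize s ^ (-((n : ℝ) / 2)) = A at *
  have hq : 0 < (ε * s) ^ n := by positivity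
  have q1 : (ε * s) ^ (n + 1) = (ε * s) ^ n * (ε * s) := pow_succ _ _
  have q2 : (ε * s) ^ (2 * n + 3) = ((ε * s) ^ n) ^ 2 * (ε * s) ^ 3 := by ring
  rw [q1, q2]
  generalize (ε * s) ^ n = Q at *
  have hn : (0 : ℝ) ≤ n := Nat.cast_nonneg n
  have hk : (0 : ℝ) ≤ k := Nat.cast_nonneg k
  have hs1 : 0 ≤ s - 1 := by linarith
  -- the difference of the two sides, as an explicit sum of nonnegative terms
  have key : 4 * ((k : ℝ) + 3) ^ 2 * ((n : ℝ) + 2) ^ 2 * ε * (A * (Q ^ 2 * (ε * s) ^ 3) * P2) -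
      (4 * (s - 1) * ((n : ℝ) / 2 * ((n : ℝ) / 2 + 1) * (A / s / s) * P0 +
        n * (A / s) * (((k : ℝ) + 3) * (((n : ℝ) + 2) * ε * (Q * (ε * s))) * P1) -
        A * (((k : ℝ) + 3) * (((n : ℝ) + 2) * ((n : ℝ) + 1) * ε ^ 2 * Q) * P1) +
        A * (((k : ℝ) + 3) * ((k : ℝ) + 2) * (((n : ℝ) + 2) * ε * (Q * (ε * s))) ^ 2 * P2)) +
      2 * ((n : ℝ) + 2) * (-((n : ℝ) / 2) * (A / s) * P0 -
        A * (((k : ℝ) + 3) * (((n : ℝ) + 2) * ε * (Q * (ε * s))) * P1))) =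
      n * ((n : ℝ) + 2) * (A / s / s) * P0 +
      4 * (s - 1) * A * (((k : ℝ) + 3) * ((n : ℝ) + 2) * ε ^ 2 * Q) * P1 +
      2 * ((n : ℝ) + 2) * A * (((k : ℝ) + 3) * (((n : ℝ) + 2) * ε * (Q * (ε * s))) * P1) +
      4 * ((k : ℝ) + 3) * ((n : ℝ) + 2) ^ 2 * A * ε ^ 4 * Q ^ 2 * s ^ 2 * P2 *
        (s + ((k : ℝ) + 2)) := by
    field_simp
    ring
  have : 0 ≤ n * ((n : ℝ) + 2) * (A / s / s) * P0 +
      4 * (s - 1) * A * (((k : ℝ) + 3) * ((n : ℝ) + 2) * ε ^ 2 * Q) * P1 +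
      2 * ((n : ℝ) + 2) * A * (((k : ℝ) + 3) * (((n : ℝ) + 2) * ε * (Q * (ε * s))) * P1) +
      4 * ((k : ℝ) + 3) * ((n : ℝ) + 2) ^ 2 * A * ε ^ 4 * Q ^ 2 * s ^ 2 * P2 *
        (s + ((k : ℝ) + 2)) := by
    positivity
  linarith

/-- In the cut-off region the remaining positive term is controlled by the `m`-th power of the
profile; the exponent `k` of the cut-off has to be large for this. -/
lemma tail_le (n k : ℕ) {m ε s : ℝ} (hm0 : 0 < m) (hm1 : m < 1)
    (hk : ((k : ℝ) + 3) * m ≤ k + 1) (hε : 0 < ε) (hs : 1 ≤ s) :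
    s ^ (-((n : ℝ) / 2)) * (ε * s) ^ (2 * n + 3) * pp (k + 1) (1 - (ε * s) ^ (n + 2)) ≤
      ε ^ ((n : ℝ) / 2 * (1 - m)) * prof n k ε s ^ m := by
  have s0 : 0 < s := by linarith
  have q0 : 0 < ε * s := by positivity
  have hA : 0 < s ^ (-((n : ℝ) / 2)) := rpow_pos_of_pos s0 _
  have hn : (0 : ℝ) ≤ n := Nat.cast_nonneg n
  by_cases hq : 1 - (ε * s) ^ (n + 2) ≤ 0
  · have : pp (k + 1) (1 - (ε * s) ^ (n + 2)) = 0 := by simp [pp, max_eq_right hq]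
    rw [this, mul_zero]
    have : 0 ≤ prof n k ε s := mul_nonneg hA.le (pp_nonneg _ _)
    positivity
  push Not at hq
  have q1 : ε * s ≤ 1 := by
    by_contra hcon
    push Not at hcon
    have := one_le_pow₀ hcon.le (n := n + 2)
    linarith
  set p := 1 - (ε * s) ^ (n + 2) with hp
  have p1 : p ≤ 1 := by rw [hp]; have : 0 < (ε * s) ^ (n + 2) := by positivity
                        linarith
  have c1 : pp (k + 1) p ≤ pp (k + 3) p ^ m := by
    simp only [pp, max_eq_left hq.le]
    rw [← rpow_natCast, ← rpow_natCast, ← rpow_mul hq.le]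
    refine rpow_le_rpow_of_exponent_ge hq p1 ?_
    push_cast
    exact hk
  have c2 : s ^ (-((n : ℝ) / 2)) * (ε * s) ^ (2 * n + 3) ≤
      ε ^ ((n : ℝ) / 2 * (1 - m)) * (s ^ (-((n : ℝ) / 2))) ^ m := by
    have h1 : (ε * s) ^ (2 * n + 3) ≤ (ε * s) ^ ((n : ℝ) / 2 * (1 - m)) := by
      rw [← rpow_natCast]
      refine rpow_le_rpow_of_exponent_ge q0 q1 ?_
      push_cast
      nlinarith
    have h2 : (ε * s) ^ ((n : ℝ) / 2 * (1 - m)) =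
        ε ^ ((n : ℝ) / 2 * (1 - m)) * s ^ ((n : ℝ) / 2 * (1 - m)) := mul_rpow hε.le s0.le
    have h3 : (s ^ (-((n : ℝ) / 2))) ^ m =
        s ^ (-((n : ℝ) / 2)) * s ^ ((n : ℝ) / 2 * (1 - m)) := by
      rw [← rpow_mul s0.le, ← rpow_add s0]
      congr 1
      ring
    calc _ ≤ s ^ (-((n : ℝ) / 2)) * (ε * s) ^ ((n : ℝ) / 2 * (1 - m)) := by gcongr
      _ = _ := by rw [h2, h3]; ring
  rw [prof, mul_rpow hA.le (pp_nonneg _ _), ← mul_assoc]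
  exact mul_le_mul c2 c1 (pp_nonneg _ _) (by positivity)

/-- The test function on the space of dimension `n + 2`. -/
def tf (n k : ℕ) (ε ρ : ℝ) (x : Euc (n + 2)) : ℝ := prof n k ε (1 + ‖x‖ ^ 2 / ρ ^ 2)

lemma one_le_arg {N : ℕ} (ρ : ℝ) (x : Euc N) : 1 ≤ 1 + ‖x‖ ^ 2 / ρ ^ 2 := by
  have : 0 ≤ ‖x‖ ^ 2 / ρ ^ 2 := by positivity
  linarith

lemma contDiff_tf (n k : ℕ) (ε ρ : ℝ) : ContDiff ℝ 2 (tf n k ε ρ) := by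
  have h1 : ContDiff ℝ 2 fun x : Euc (n + 2) => 1 + ‖x‖ ^ 2 / ρ ^ 2 :=
    contDiff_const.add ((contDiff_norm_sq ℝ).div_const _)
  have h2 : ContDiff ℝ 2 fun x : Euc (n + 2) => (1 + ‖x‖ ^ 2 / ρ ^ 2) ^ (-((n : ℝ) / 2)) :=
    h1.rpow_const_of_ne fun x => by have := one_le_arg ρ x; linarith
  exact h2.mul ((contDiff_pp k).comp (contDiff_const.sub ((contDiff_const.mul h1).pow (n + 2))))

/-- Second directional derivatives of the radial function `tf`, computed along lines. -/
lemma d2_tf (n k : ℕ) (ε ρ : ℝ) (x e : Euc (n + 2)) :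
    d2 (tf n k ε ρ) x e = prof2 n k ε (1 + ‖x‖ ^ 2 / ρ ^ 2) * (2 * ⟪x, e⟫ / ρ ^ 2) ^ 2 +
      prof1 n k ε (1 + ‖x‖ ^ 2 / ρ ^ 2) * (2 * ‖e‖ ^ 2 / ρ ^ 2) := by
  have hq : ∀ s : ℝ, HasDerivAt (fun s : ℝ => 1 + ‖x + s • e‖ ^ 2 / ρ ^ 2)
      ((2 * ⟪x, e⟫ + 2 * s * ‖e‖ ^ 2) / ρ ^ 2) s := by
    intro s
    have e1 : (fun s : ℝ => 1 + ‖x + s • e‖ ^ 2 / ρ ^ 2) =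
        fun s : ℝ => 1 + (‖x‖ ^ 2 + s * (2 * ⟪x, e⟫) + s ^ 2 * ‖e‖ ^ 2) / ρ ^ 2 := by
      funext s
      rw [norm_add_sq_real, inner_smul_right, norm_smul, mul_pow, Real.norm_eq_abs, sq_abs]
      ring
    rw [e1]
    have h1 := (hasDerivAt_id s).mul_const (2 * ⟪x, e⟫)
    have h2 := ((hasDerivAt_id s).pow 2).mul_const (‖e‖ ^ 2)
    refine ((((h1.const_add (‖x‖ ^ 2)).add h2).div_const (ρ ^ 2)).const_add 1).congr_deriv ?_
    simp
  have pos : ∀ s : ℝ, 0 < 1 + ‖x + s • e‖ ^ 2 / ρ ^ 2 := fun s => by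
    have := one_le_arg ρ (x + s • e); linarith
  have F1 : (fun s : ℝ => fderiv ℝ (tf n k ε ρ) (x + s • e) e) = fun s =>
      prof1 n k ε (1 + ‖x + s • e‖ ^ 2 / ρ ^ 2) * ((2 * ⟪x, e⟫ + 2 * s * ‖e‖ ^ 2) / ρ ^ 2) := by
    funext s
    exact (hasDerivAt_line₁ (contDiff_tf n k ε ρ) x e s).unique
      ((hasDerivAt_prof n k ε (pos s)).comp s (hq s))
  have F2 := hasDerivAt_line₂ (contDiff_tf n k ε ρ) x e 0
  rw [F1] at F2
  have h3 : HasDerivAt (fun s : ℝ => (2 * ⟪x, e⟫ + 2 * s * ‖e‖ ^ 2) / ρ ^ 2)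
      (2 * ‖e‖ ^ 2 / ρ ^ 2) 0 := by
    refine (((((hasDerivAt_id (0 : ℝ)).const_mul 2).mul_const (‖e‖ ^ 2)).const_add
      (2 * ⟪x, e⟫)).div_const (ρ ^ 2)).congr_deriv ?_
    simp
  have h4 := (hasDerivAt_prof1 n k ε (pos 0)).comp 0 (hq 0)
  have := F2.unique (h4.mul h3)
  simp only [zero_smul, add_zero, Function.comp, mul_zero, zero_mul] at this
  rw [this]
  ring

/-- With `s = 1 + |x|²/ρ²` and `P` the profile, `Δ P(s) = (4 (s - 1) P₂ + 2 (n + 2) P₁) / ρ²`, where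
`P₁` and `P₂` are the first two derivatives of `P`. -/
lemma lapl_tf (n k : ℕ) (ε : ℝ) {ρ : ℝ} (hρ : 0 < ρ) (x : Euc (n + 2)) :
    lapl (tf n k ε ρ) x = (4 * (1 + ‖x‖ ^ 2 / ρ ^ 2 - 1) * prof2 n k ε (1 + ‖x‖ ^ 2 / ρ ^ 2) +
      2 * ((n : ℝ) + 2) * prof1 n k ε (1 + ‖x‖ ^ 2 / ρ ^ 2)) / ρ ^ 2 := by
  have h : ∑ i : Fin (n + 2), x i ^ 2 = ‖x‖ ^ 2 := (EuclideanSpace.real_norm_sq_eq x).symm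
  simp only [lapl_eq_sum, d2_tf, EuclideanSpace.inner_single_right]
  rw [Finset.sum_add_distrib]
  simp only [div_pow, mul_pow, ← Finset.mul_sum, ← Finset.sum_div]
  simp [h]
  field_simp
  ring

/-- Young's inequality for the sublinear power, with the free parameter `l`; the constants are
not optimal. -/
lemma rpow_le_young {m a l : ℝ} (hm0 : 0 < m) (hm1 : m < 1) (ha : 0 ≤ a) (hl : 0 < l) :
    a ^ m ≤ l ^ (m - 1) * a + l ^ m := by
  have p1 : 0 < l ^ (m - 1) := rpow_pos_of_pos hl _
  have p2 : 0 < l ^ m := rpow_pos_of_pos hl _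
  rcases le_or_gt a l with h | h
  · have := rpow_le_rpow ha h hm0.le
    nlinarith [mul_nonneg p1.le ha]
  · have a0 : 0 < a := hl.trans h
    have h1 : a ^ (m - 1) ≤ l ^ (m - 1) :=
      rpow_le_rpow_of_nonpos hl h.le (by linarith)
    have h2 : a ^ m = a ^ (m - 1) * a := by
      rw [rpow_sub_one a0.ne', div_mul_cancel₀ _ a0.ne']
    rw [h2]
    nlinarith

lemma prof_nonneg (n k : ℕ) (ε : ℝ) {s : ℝ} (hs : 0 < s) : 0 ≤ prof n k ε s :=
  mul_nonneg (rpow_nonneg hs.le _) (pp_nonneg _ _)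

lemma prof_anti (n k : ℕ) {ε s t : ℝ} (hε : 0 ≤ ε) (hs : 0 < s) (hst : s ≤ t) :
    prof n k ε t ≤ prof n k ε s := by
  have hn : (0 : ℝ) ≤ n := Nat.cast_nonneg n
  unfold prof
  refine mul_le_mul (rpow_le_rpow_of_nonpos hs hst (by linarith)) ?_ (pp_nonneg _ _)
    (rpow_nonneg hs.le _)
  unfold pp
  gcongr

lemma prof_le_one (n k : ℕ) {ε s : ℝ} (hε : 0 ≤ ε) (hs : 1 ≤ s) : prof n k ε s ≤ 1 := by
  refine (prof_anti n k hε one_pos hs).trans ?_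
  rw [prof, one_rpow, one_mul, mul_one]
  have : 0 ≤ ε ^ (n + 2) := by positivity
  refine pow_le_one₀ (le_max_right _ _) (max_le (by linarith) zero_le_one)

lemma prof_eq_zero (n k : ℕ) {ε s : ℝ} (hs : 1 ≤ ε * s) : prof n k ε s = 0 := by
  have : 1 - (ε * s) ^ (n + 2) ≤ 0 := by linarith [one_le_pow₀ hs (n := n + 2)]
  simp [prof, pp, max_eq_right this]

/-- `Δφ` is at most a small multiple of `φ ^ m`, by `radial_le` and `tail_le`. -/
lemma lapl_tf_le (n k : ℕ) {m ε ρ : ℝ} (hm0 : 0 < m) (hm1 : m < 1)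
    (hk : ((k : ℝ) + 3) * m ≤ k + 1) (hε : 0 < ε) (hρ : 0 < ρ) (x : Euc (n + 2)) :
    lapl (tf n k ε ρ) x ≤ 4 * ((k : ℝ) + 3) ^ 2 * ((n : ℝ) + 2) ^ 2 / ρ ^ 2 *
      (ε * ε ^ ((n : ℝ) / 2 * (1 - m))) * tf n k ε ρ x ^ m := by
  rw [lapl_tf n k ε hρ]
  have hs := one_le_arg ρ x
  have h1 := radial_le n k hε hs
  have h2 := tail_le n k hm0 hm1 hk hε hs
  have h3 : 4 * (1 + ‖x‖ ^ 2 / ρ ^ 2 - 1) * prof2 n k ε (1 + ‖x‖ ^ 2 / ρ ^ 2) +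
      2 * ((n : ℝ) + 2) * prof1 n k ε (1 + ‖x‖ ^ 2 / ρ ^ 2) ≤
      4 * ((k : ℝ) + 3) ^ 2 * ((n : ℝ) + 2) ^ 2 * ε *
      (ε ^ ((n : ℝ) / 2 * (1 - m)) * prof n k ε (1 + ‖x‖ ^ 2 / ρ ^ 2) ^ m) :=
    h1.trans (mul_le_mul_of_nonneg_left h2 (by positivity))
  refine (div_le_div_of_nonneg_right h3 (sq_nonneg ρ)).trans (le_of_eq ?_)
  rw [tf]
  ring

/-- Cut-offs `φ`, arbitrarily close to one on a given ball, whose Laplacian is almost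
nonpositive in the sense adapted to the sublinear power `y ^ m`. First the width `ρ` of the
superharmonic power is chosen, then the cut-off parameter `ε`. -/
lemma exists_test (n : ℕ) (hn : 1 ≤ n) {m κ : ℝ} (hm0 : 0 < m) (hm1 : m < 1) (hκ : 0 < κ) (r : ℝ) :
    ∃ φ g : Euc (n + 2) → ℝ, ContDiff ℝ 2 φ ∧ HasCompactSupport φ ∧ (∀ x, 0 ≤ φ x) ∧
      (∀ x, φ x ≤ 1) ∧ (∀ x, ‖x‖ ≤ r → 1 - κ ≤ φ x) ∧ Integrable g ∧ ∫ x, g x ≤ κ ∧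
      ∀ x y, 0 ≤ y → y ^ m * lapl φ x ≤ κ * (y * φ x) + g x := by
  have hm : 0 < 1 - m := by linarith
  obtain ⟨k, hk0⟩ := exists_nat_ge ((3 * m - 1) / (1 - m))
  have hk : ((k : ℝ) + 3) * m ≤ k + 1 := by
    rw [div_le_iff₀ hm] at hk0
    linarith
  set D : ℝ := 4 * ((k : ℝ) + 3) ^ 2 * ((n : ℝ) + 2) ^ 2 with hD
  have D0 : 0 < D := by positivity
  have hsq : Tendsto (fun ρ : ℝ => ρ ^ 2) atTop atTop := tendsto_pow_atTop (by norm_num)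
  have T1 : Tendsto (fun ρ : ℝ => D / ρ ^ 2) atTop (𝓝 0) := hsq.const_div_atTop D
  have T2 : Tendsto (fun ρ : ℝ => (1 + r ^ 2 / ρ ^ 2) ^ (-((n : ℝ) / 2))) atTop (𝓝 1) := by
    have h1 : Tendsto (fun ρ : ℝ => 1 + r ^ 2 / ρ ^ 2) atTop (𝓝 1) := by
      simpa using (hsq.const_div_atTop (r ^ 2)).const_add 1
    have := h1.rpow_const (p := -((n : ℝ) / 2)) (Or.inl one_ne_zero)
    simpa using this
  obtain ⟨ρ, hρ1, hρ2, hρ⟩ := ((T1.eventually (gt_mem_nhds hκ)).and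
    ((T2.eventually (lt_mem_nhds (show 1 - κ < 1 by linarith))).and
      (eventually_gt_atTop (0 : ℝ)))).exists
  set c : ℝ := volume.real (Metric.ball (0 : Euc (n + 2)) 1) with hc
  have T3 : Tendsto (fun ε : ℝ => D / ρ ^ 2 * (ρ ^ (n + 2) * c) * ε ^ (m / (1 - m))) (𝓝[>] 0)
      (𝓝 0) := by
    have h1 : ContinuousAt (fun ε : ℝ => ε ^ (m / (1 - m))) 0 :=
      continuousAt_rpow_const _ _ (Or.inr (by positivity))
    have h2 := (h1.tendsto.const_mul (D / ρ ^ 2 * (ρ ^ (n + 2) * c))).mono_left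
      (nhdsWithin_le_nhds (s := Set.Ioi 0))
    simpa [zero_rpow (show m / (1 - m) ≠ 0 by positivity)] using h2
  have T4 : Tendsto (fun ε : ℝ => prof n k ε (1 + r ^ 2 / ρ ^ 2)) (𝓝[>] 0)
      (𝓝 ((1 + r ^ 2 / ρ ^ 2) ^ (-((n : ℝ) / 2)))) := by
    have h1 : Continuous fun ε : ℝ => prof n k ε (1 + r ^ 2 / ρ ^ 2) := by
      unfold prof
      exact continuous_const.mul ((continuous_pp _).comp (by fun_prop))
    have h2 := (h1.tendsto 0).mono_left (nhdsWithin_le_nhds (s := Set.Ioi 0))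
    simpa [prof, pp] using h2
  obtain ⟨ε, hε1, hε2, hε⟩ := ((T3.eventually (gt_mem_nhds hκ)).and
    ((T4.eventually (lt_mem_nhds hρ2)).and self_mem_nhdsWithin)).exists
  replace hε : 0 < ε := hε
  -- the threshold `l` in Young's inequality is chosen so that the coefficient of `y * φ` becomes
  -- `D / ρ ^ 2`, free of `ε`; the error term then integrates to a multiple of `ε ^ (m / (1 - m))`
  set l : ℝ := ε ^ ((n : ℝ) / 2 + 1 / (1 - m)) with hl
  have l0 : 0 < l := rpow_pos_of_pos hε _
  -- radius of the support of the test function: `ε * (1 + |x|²/ρ²) ≥ 1` as soon as `|x| ≥ R`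
  set R : ℝ := ρ * ε ^ (-(1 / 2) : ℝ) with hR
  have R0 : 0 < R := mul_pos hρ (rpow_pos_of_pos hε _)
  have hR2 : R ^ 2 = ρ ^ 2 / ε := by
    rw [hR, mul_pow, ← rpow_natCast (ε ^ (-(1 / 2) : ℝ)), ← rpow_mul hε.le]
    norm_num
    rw [rpow_neg_one]
    rfl
  set B : Set (Euc (n + 2)) := Metric.ball 0 R with hB
  have out : ∀ x, x ∉ B → tf n k ε ρ x = 0 := by
    intro x hx
    have hx' : R ≤ ‖x‖ := by simpa [hB] using hx
    have h1 : ρ ^ 2 / ε ≤ ‖x‖ ^ 2 := by rw [← hR2]; gcongr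
    refine prof_eq_zero n k ?_
    rw [div_le_iff₀ hε] at h1
    have : 1 ≤ ε * (‖x‖ ^ 2 / ρ ^ 2) := by
      rw [← mul_div_assoc, le_div_iff₀ (by positivity)]
      linarith
    linarith
  have nn : ∀ x, 0 ≤ tf n k ε ρ x := fun x =>
    prof_nonneg n k ε (by linarith [one_le_arg ρ x])
  refine ⟨tf n k ε ρ, B.indicator fun _ => D / ρ ^ 2 * l, contDiff_tf n k ε ρ, ?_, nn,
    fun x => prof_le_one n k hε.le (one_le_arg ρ x), ?_, ?_, ?_, ?_⟩
  · exact HasCompactSupport.of_support_subset_isCompact (isCompact_closedBall (0 : Euc (n + 2)) R)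
      fun x hx => Metric.ball_subset_closedBall (by_contra fun h => hx (out x h))
  · intro x hx
    refine hε2.le.trans (prof_anti n k hε.le (by linarith [one_le_arg ρ x]) ?_)
    gcongr
  · exact (integrableOn_const measure_ball_lt_top.ne :
      IntegrableOn (fun _ => D / ρ ^ 2 * l) B).integrable_indicator Metric.isOpen_ball.measurableSet
  · rw [integral_indicator Metric.isOpen_ball.measurableSet, setIntegral_const, smul_eq_mul]
    have v : volume.real B = ρ ^ (n + 2) * ε ^ (-((n : ℝ) / 2 + 1)) * c := by
      rw [hB, measureReal_def, Measure.addHaar_ball _ _ R0.le, ENNReal.toReal_mul,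
        ENNReal.toReal_ofReal (by positivity), finrank_euclideanSpace_fin, hR, mul_pow,
        ← rpow_natCast (ε ^ (-(1 / 2) : ℝ)), ← rpow_mul hε.le, hc, measureReal_def]
      congr 3
      push_cast
      ring
    have w : ε ^ (-((n : ℝ) / 2 + 1)) * l = ε ^ (m / (1 - m)) := by
      rw [hl, ← rpow_add hε]
      congr 1
      field_simp
      ring
    rw [v]
    calc _ = D / ρ ^ 2 * (ρ ^ (n + 2) * c) * (ε ^ (-((n : ℝ) / 2 + 1)) * l) := by ring
      _ ≤ κ := by rw [w]; exact hε1.le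
  · intro x y hy
    have h1 := lapl_tf_le n k hm0 hm1 hk hε hρ x
    rw [← hD] at h1
    by_cases hx : x ∈ B
    · rw [Set.indicator_of_mem hx]
      have h2 := rpow_le_young hm0 hm1 (mul_nonneg hy (nn x)) l0
      have e0 : (ε * ε ^ ((n : ℝ) / 2 * (1 - m))) * l ^ (m - 1) = 1 := by
        nth_rw 1 [← rpow_one ε]
        rw [hl, ← rpow_mul hε.le, ← rpow_add hε, ← rpow_add hε]
        have : 1 + (n : ℝ) / 2 * (1 - m) + ((n : ℝ) / 2 + 1 / (1 - m)) * (m - 1) = 0 := by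
          field_simp
          ring
        rw [this, rpow_zero]
      have e1 : l ^ m = l ^ (m - 1) * l := by
        rw [rpow_sub_one l0.ne', div_mul_cancel₀ _ l0.ne']
      set E := ε * ε ^ ((n : ℝ) / 2 * (1 - m)) with hE
      have E0 : 0 < E := mul_pos hε (rpow_pos_of_pos hε _)
      calc y ^ m * lapl (tf n k ε ρ) x ≤ y ^ m * (D / ρ ^ 2 * E * tf n k ε ρ x ^ m) :=
            mul_le_mul_of_nonneg_left h1 (rpow_nonneg hy _)
        _ = D / ρ ^ 2 * E * (y * tf n k ε ρ x) ^ m := by rw [mul_rpow hy (nn x)]; ring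
        _ ≤ D / ρ ^ 2 * E * (l ^ (m - 1) * (y * tf n k ε ρ x) + l ^ m) := by gcongr
        _ = D / ρ ^ 2 * (E * l ^ (m - 1)) * (y * tf n k ε ρ x + l) := by rw [e1]; ring
        _ = D / ρ ^ 2 * (y * tf n k ε ρ x) + D / ρ ^ 2 * l := by rw [e0]; ring
        _ ≤ _ := by have := nn x; gcongr
    · rw [Set.indicator_of_notMem hx, out x hx]
      rw [out x hx, zero_rpow hm0.ne', mul_zero] at h1
      simpa using mul_nonpos_of_nonneg_of_nonpos (rpow_nonneg hy m) h1

/-! ### The difference of two solutions -/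

lemma sol_hasDerivAt {N : ℕ} {m T : ℝ} {u : Euc N → ℝ → ℝ} {u₀ : Euc N → ℝ}
    (hu : IsFDESol N m T u u₀) (x : Euc N) {t : ℝ} (ht : t ∈ Set.Ioo (0 : ℝ) T) :
    HasDerivAt (u x) (fderiv ℝ (fun p : Euc N × ℝ => u p.1 p.2) (x, t) (0, 1)) t := by
  have ho : IsOpen (Set.univ ×ˢ Set.Ioo (0 : ℝ) T : Set (Euc N × ℝ)) := isOpen_univ.prod isOpen_Ioo
  have h1 := (hu.2.1.contDiffAt (ho.mem_nhds (show (x, t) ∈ _ from ⟨trivial, ht⟩))).differentiableAt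
    (by simp)
  exact h1.hasFDerivAt.comp_hasDerivAt t ((hasDerivAt_const t x).prodMk (hasDerivAt_id t))

lemma sol_continuousOn_deriv {N : ℕ} {m T : ℝ} {u : Euc N → ℝ → ℝ} {u₀ : Euc N → ℝ}
    (hu : IsFDESol N m T u u₀) :
    ContinuousOn (fun p : Euc N × ℝ => deriv (u p.1) p.2) (Set.univ ×ˢ Set.Ioo (0 : ℝ) T) := by
  have ho : IsOpen (Set.univ ×ˢ Set.Ioo (0 : ℝ) T : Set (Euc N × ℝ)) := isOpen_univ.prod isOpen_Ioo
  have h1 := hu.2.1.continuousOn_fderiv_of_isOpen ho (by simp)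
  refine (h1.clm_apply (continuousOn_const (c := ((0 : Euc N), (1 : ℝ))))).congr fun p hp => ?_
  exact (sol_hasDerivAt hu p.1 hp.2).deriv

lemma sol_contDiff {N : ℕ} {m T : ℝ} {u : Euc N → ℝ → ℝ} {u₀ : Euc N → ℝ}
    (hu : IsFDESol N m T u u₀) {t : ℝ} (ht : t ∈ Set.Ioo (0 : ℝ) T) :
    ContDiff ℝ 2 fun x => u x t ^ m := by
  have h1 : ContDiff ℝ (⊤ : ℕ∞) fun x => u x t := by
    rw [← contDiffOn_univ]
    exact hu.2.1.comp (contDiff_id.prodMk contDiff_const).contDiffOn fun x _ => ⟨trivial, ht⟩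
  exact (contDiff_infty.1 h1 2).rpow_const_of_ne fun x => (hu.1 x t ht).ne'

lemma sol_continuous {N : ℕ} {m T : ℝ} {u : Euc N → ℝ → ℝ} {u₀ : Euc N → ℝ}
    (hu : IsFDESol N m T u u₀) {t : ℝ} (ht : t ∈ Set.Ico (0 : ℝ) T) :
    Continuous fun x => u x t := by
  rw [← continuousOn_univ]
  exact hu.2.2.1.comp (by fun_prop : Continuous fun x : Euc N => (x, t)).continuousOn
    fun x _ => ⟨trivial, ht⟩

lemma lapl_sub {N : ℕ} {f g : Euc N → ℝ} (hf : ContDiff ℝ 2 f) (hg : ContDiff ℝ 2 g) (x : Euc N) :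
    lapl (fun y => f y - g y) x = lapl f x - lapl g x := by
  unfold lapl
  rw [← Finset.sum_sub_distrib]
  refine Finset.sum_congr rfl fun i _ => ?_
  have := iteratedFDeriv_sub_apply (x := x) (i := 2) (𝕜 := ℝ) hf.contDiffAt hg.contDiffAt
  have e : (fun y => f y - g y) = f - g := rfl
  rw [e, this]
  rfl

/-- A choice of sign of `u(·,t) - v(·,t)`, equal to one where the difference vanishes. -/
def sg {N : ℕ} (u v : Euc N → ℝ → ℝ) (t : ℝ) (x : Euc N) : ℝ := if v x t ≤ u x t then 1 else -1

lemma abs_sg {N : ℕ} (u v : Euc N → ℝ → ℝ) (t : ℝ) (x : Euc N) : |sg u v t x| ≤ 1 := by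
  unfold sg; split_ifs <;> simp

lemma sg_mul {N : ℕ} (u v : Euc N → ℝ → ℝ) (t : ℝ) (x : Euc N) :
    sg u v t x * (u x t - v x t) = |u x t - v x t| := by
  unfold sg
  split_ifs with h
  · rw [one_mul, abs_of_nonneg (by linarith)]
  · rw [abs_of_neg (by linarith)]; ring

lemma sg_mul_rpow {N : ℕ} {u v : Euc N → ℝ → ℝ} {m t : ℝ} (hm : 0 < m) (x : Euc N)
    (hu : 0 < u x t) (hv : 0 < v x t) :
    sg u v t x * (u x t ^ m - v x t ^ m) = |u x t ^ m - v x t ^ m| := by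
  unfold sg
  split_ifs with h
  · have := rpow_le_rpow hv.le h hm.le
    rw [one_mul, abs_of_nonneg (by linarith)]
  · have := rpow_lt_rpow hu.le (not_le.1 h) hm
    rw [abs_of_neg (by linarith)]; ring

/-- Hölder continuity of `y ^ m` with exponent `m` and constant one, by subadditivity. -/
lemma abs_rpow_sub_le {a b m : ℝ} (ha : 0 < a) (hb : 0 < b) (hm0 : 0 < m) (hm1 : m < 1) :
    |a ^ m - b ^ m| ≤ |a - b| ^ m := by
  wlog h : b ≤ a generalizing a b
  · rw [abs_sub_comm, abs_sub_comm a]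
    exact this hb ha (le_of_not_ge h)
  have h1 := rpow_le_rpow hb.le h hm0.le
  rw [abs_of_nonneg (by linarith), abs_of_nonneg (by linarith)]
  have := Real.rpow_add_le_add_rpow (a := a - b) (b := b) (p := m) (by linarith) hb.le hm0.le hm1.le
  simp only [sub_add_cancel] at this
  linarith

/-- Differentiation in time under the integral, the sign being frozen at the time `t` at which
the derivative is taken. -/
lemma hasDerivAt_sg_integral {N : ℕ} {m T : ℝ} {u v : Euc N → ℝ → ℝ} {u₀ v₀ φ : Euc N → ℝ}
    (hu : IsFDESol N m T u u₀) (hv : IsFDESol N m T v v₀) (hφ : ContDiff ℝ 2 φ)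
    (hc : HasCompactSupport φ) (h0 : ∀ x, 0 ≤ φ x) {t : ℝ} (ht : t ∈ Set.Ioo (0 : ℝ) T) :
    HasDerivAt (fun s => ∫ x, sg u v t x * ((u x s - v x s) * φ x))
      (∫ x, sg u v t x * lapl (fun y => u y t ^ m - v y t ^ m) x * φ x) t := by
  have hφc := hφ.continuous
  have hσ : Measurable (sg u v t) :=
    Measurable.ite (measurableSet_le (sol_continuous hv ⟨ht.1.le, ht.2⟩).measurable
      (sol_continuous hu ⟨ht.1.le, ht.2⟩).measurable) measurable_const measurable_const
  obtain ⟨δ, hδ, hsub⟩ := Metric.nhds_basis_closedBall.mem_iff.1 (isOpen_Ioo.mem_nhds ht)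
  have hint : ∀ s ∈ Set.Ioo (0 : ℝ) T, Integrable fun x => sg u v t x * ((u x s - v x s) * φ x) := by
    intro s hs
    have c1 := sol_continuous hu ⟨hs.1.le, hs.2⟩
    have c2 := sol_continuous hv ⟨hs.1.le, hs.2⟩
    exact (((c1.sub c2).mul hφc).integrable_of_hasCompactSupport hc.mul_left).bdd_mul (c := 1)
      hσ.aestronglyMeasurable (Eventually.of_forall (abs_sg u v t))
  have hcont : ContinuousOn (fun p : Euc N × ℝ => deriv (u p.1) p.2 - deriv (v p.1) p.2)
      (tsupport φ ×ˢ Metric.closedBall t δ) :=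
    ((sol_continuousOn_deriv hu).sub (sol_continuousOn_deriv hv)).mono
      (Set.prod_mono (Set.subset_univ _) hsub)
  obtain ⟨M, hM⟩ := (hc.isCompact.prod (isCompact_closedBall t δ)).exists_bound_of_continuousOn hcont
  have hct : Continuous fun x => deriv (u x) t - deriv (v x) t := by
    rw [← continuousOn_univ]
    exact ((sol_continuousOn_deriv hu).sub (sol_continuousOn_deriv hv)).comp
      (by fun_prop : Continuous fun x : Euc N => (x, t)).continuousOn fun x _ => ⟨trivial, ht⟩
  have key := hasDerivAt_integral_of_dominated_loc_of_deriv_le (μ := volume)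
    (F := fun s x => sg u v t x * ((u x s - v x s) * φ x))
    (F' := fun s x => sg u v t x * ((deriv (u x) s - deriv (v x) s) * φ x))
    (bound := fun x => M * φ x) (Metric.closedBall_mem_nhds t hδ)
    (by filter_upwards [isOpen_Ioo.mem_nhds ht] with s hs
        exact (hint s hs).aestronglyMeasurable)
    (hint t ht) ((hσ.mul (hct.mul hφc).measurable).aestronglyMeasurable)
    (Eventually.of_forall fun x s hs => by
      rw [norm_mul, norm_mul, Real.norm_of_nonneg (h0 x)]
      by_cases hx : x ∈ tsupport φ
      · have h1 := hM (x, s) ⟨hx, hs⟩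
        have h2 := abs_sg u v t x
        rw [← Real.norm_eq_abs] at h2
        calc _ ≤ 1 * (‖deriv (u x) s - deriv (v x) s‖ * φ x) := by
              gcongr
              exact mul_nonneg (norm_nonneg _) (h0 x)
          _ ≤ M * φ x := by
              rw [one_mul]
              exact mul_le_mul_of_nonneg_right h1 (h0 x)
      · simp [image_eq_zero_of_notMem_tsupport hx])
    ((hφc.integrable_of_hasCompactSupport hc).const_mul M)
    (Eventually.of_forall fun x s hs => by
      have a := (sol_hasDerivAt hu x (hsub hs)).differentiableAt.hasDerivAt
      have b := (sol_hasDerivAt hv x (hsub hs)).differentiableAt.hasDerivAt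
      exact ((a.sub b).mul_const (φ x)).const_mul _)
  refine key.2.congr_deriv ?_
  refine integral_congr_ae (Eventually.of_forall fun x => ?_)
  have e : lapl (fun y => u y t ^ m - v y t ^ m) x = deriv (u x) t - deriv (v x) t := by
    rw [lapl_sub (sol_contDiff hu ht) (sol_contDiff hv ht)]
    exact congrArg₂ _ (hu.2.2.2.2 x t ht).symm (hv.2.2.2.2 x t ht).symm
  simp only [e]
  ring

/-- The differential inequality `h' ≤ κ h + κ` for `h(t) = ∫ |u - v| φ`, in infinitesimal form:
the bound holds for the time derivative with the sign frozen at time `t`. -/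
lemma deriv_bound {N : ℕ} {m T κ : ℝ} {u v : Euc N → ℝ → ℝ} {u₀ v₀ φ g : Euc N → ℝ}
    (hm0 : 0 < m) (hm1 : m < 1) (hκ : 0 < κ)
    (hu : IsFDESol N m T u u₀) (hv : IsFDESol N m T v v₀) (hφ : ContDiff ℝ 2 φ)
    (hc : HasCompactSupport φ) (h0 : ∀ x, 0 ≤ φ x) (hg : Integrable g) (hgκ : ∫ x, g x ≤ κ)
    (H : ∀ x y, 0 ≤ y → y ^ m * lapl φ x ≤ κ * (y * φ x) + g x)
    {t : ℝ} (ht : t ∈ Set.Ioo (0 : ℝ) T) :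
    ∫ x, sg u v t x * lapl (fun y => u y t ^ m - v y t ^ m) x * φ x ≤
      κ * (∫ x, |u x t - v x t| * φ x) + κ := by
  have cu := sol_continuous hu ⟨ht.1.le, ht.2⟩
  have cv := sol_continuous hv ⟨ht.1.le, ht.2⟩
  have hσ : Measurable (sg u v t) :=
    Measurable.ite (measurableSet_le cv.measurable cu.measurable) measurable_const measurable_const
  obtain ⟨I1, K⟩ := kato_lapl ((sol_contDiff hu ht).sub (sol_contDiff hv ht)) hφ hc h0 hσ
    (abs_sg u v t) (fun x => sg_mul_rpow hm0 x (hu.1 x t ht) (hv.1 x t ht))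
  have I2 : Integrable fun x => |u x t - v x t| * φ x :=
    ((cu.sub cv).abs.mul hφ.continuous).integrable_of_hasCompactSupport hc.mul_left
  refine K.trans ?_
  have : ∫ x, |u x t ^ m - v x t ^ m| * lapl φ x ≤ ∫ x, (κ * (|u x t - v x t| * φ x) + g x) := by
    refine integral_mono I1 ((I2.const_mul κ).add hg) fun x => ?_
    -- `y` is chosen so that `y ^ m = |u ^ m - v ^ m|`; the sign of `lapl φ x` is then irrelevant
    set y : ℝ := |u x t ^ m - v x t ^ m| ^ m⁻¹ with hy
    have y0 : 0 ≤ y := by positivity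
    have ym : y ^ m = |u x t ^ m - v x t ^ m| := rpow_inv_rpow (abs_nonneg _) hm0.ne'
    have yle : y ≤ |u x t - v x t| := by
      refine (rpow_le_rpow_iff y0 (abs_nonneg _) hm0).1 ?_
      rw [ym]
      exact abs_rpow_sub_le (hu.1 x t ht) (hv.1 x t ht) hm0 hm1
    have := H x y y0
    rw [ym] at this
    refine this.trans ?_
    have := h0 x
    show κ * (y * φ x) + g x ≤ κ * (|u x t - v x t| * φ x) + g x
    gcongr
  refine this.trans ?_
  rw [integral_add (I2.const_mul κ) hg, integral_const_mul]
  linarith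

/-- The integrated form of the differential inequality `h' ≤ κ h + κ` for
`h(t) = ∫ |u - v| φ`, obtained from `deriv_bound` by Grönwall's lemma in reversed time. -/
lemma weighted_bound {N : ℕ} {m T κ : ℝ} {u v : Euc N → ℝ → ℝ} {u₀ v₀ φ g : Euc N → ℝ}
    (hm0 : 0 < m) (hm1 : m < 1) (hκ : 0 < κ)
    (hu : IsFDESol N m T u u₀) (hv : IsFDESol N m T v v₀) (hφ : ContDiff ℝ 2 φ)
    (hc : HasCompactSupport φ) (h0 : ∀ x, 0 ≤ φ x) (hg : Integrable g) (hgκ : ∫ x, g x ≤ κ)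
    (H : ∀ x y, 0 ≤ y → y ^ m * lapl φ x ≤ κ * (y * φ x) + g x)
    {t : ℝ} (ht : t ∈ Set.Ico (0 : ℝ) T) :
    (∫ x, |u x t - v x t| * φ x) * exp (-κ * t) ≤
      (∫ x, |u x 0 - v x 0| * φ x) + 1 - exp (-κ * t) := by
  set h : ℝ → ℝ := fun s => ∫ x, |u x s - v x s| * φ x with hh
  have hsub : Set.Icc 0 t ⊆ Set.Ico 0 T := fun s hs => ⟨hs.1, hs.2.trans_lt ht.2⟩
  have hcont : ContinuousOn h (Set.Icc 0 t) := by
    refine continuousOn_integral_of_compact_support (k := tsupport φ) hc.isCompact ?_ ?_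
    · have sw : ∀ {w : Euc N → ℝ → ℝ} {w₀ : Euc N → ℝ}, IsFDESol N m T w w₀ →
          ContinuousOn (fun p : ℝ × Euc N => w p.2 p.1) (Set.Icc 0 t ×ˢ Set.univ) := by
        intro w w₀ hw
        exact hw.2.2.1.comp continuous_swap.continuousOn fun p hp => ⟨trivial, hsub hp.1⟩
      exact ((sw hu).sub (sw hv)).abs.mul (hφ.continuous.comp continuous_snd).continuousOn
    · intro s x _ hx
      simp [image_eq_zero_of_notMem_tsupport hx]
  -- Time is reversed: the convexity inequality below controls `h(s) - h(τ)` for `s < τ` by the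
  -- sign at the later time `τ`, that is, it estimates left slopes of `h`, so that the
  -- Grönwall lemma has to be run from `t` down to `0`.
  have G := le_gronwallBound_of_liminf_deriv_right_le (f := fun s => -h (t - s))
    (f' := fun s => ∫ x, sg u v (t - s) x * lapl (fun y => u y (t - s) ^ m - v y (t - s) ^ m) x * φ x)
    (δ := -h t) (K := -κ) (ε := κ) (a := 0) (b := t)
    ((hcont.comp (by fun_prop) fun s hs => ⟨by linarith [hs.2], by linarith [hs.1]⟩).neg)
    (by
      intro s hs r hr
      have hτ : t - s ∈ Set.Ioo (0 : ℝ) T := ⟨by linarith [hs.2], by linarith [hs.1, ht.2]⟩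
      set τ := t - s with hτdef
      have d1 := hasDerivAt_sg_integral hu hv hφ hc h0 hτ
      have d2' : HasDerivAt (fun z : ℝ => t - z) (-1) s := by
        simpa using (hasDerivAt_id s).const_sub t
      have d3 := (d1.comp s d2').neg
      have sl := (hasDerivAt_iff_tendsto_slope.1 d3).mono_left
        (nhdsWithin_mono s (fun z (hz : s < z) => ne_of_gt hz) : 𝓝[>] s ≤ 𝓝[≠] s)
      refine Eventually.frequently ?_
      filter_upwards [sl.eventually (gt_mem_nhds (by simpa using hr)),
        Ioo_mem_nhdsGT hs.2] with z hz1 hz2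
      refine lt_of_le_of_lt ?_ hz1
      rw [slope_def_module, smul_eq_mul]
      refine mul_le_mul_of_nonneg_left ?_ (by simpa using hz2.1.le)
      have hz' : t - z ∈ Set.Ico (0 : ℝ) T := ⟨by linarith [hz2.2], by linarith [hz2.1, hs.1, ht.2]⟩
      have hσ : Measurable (sg u v τ) :=
        Measurable.ite (measurableSet_le (sol_continuous hv ⟨hτ.1.le, hτ.2⟩).measurable
          (sol_continuous hu ⟨hτ.1.le, hτ.2⟩).measurable) measurable_const measurable_const
      have cz := ((sol_continuous hu hz').sub (sol_continuous hv hz'))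
      have I1 : Integrable fun x => sg u v τ x * ((u x (t - z) - v x (t - z)) * φ x) :=
        ((cz.mul hφ.continuous).integrable_of_hasCompactSupport hc.mul_left).bdd_mul (c := 1)
          hσ.aestronglyMeasurable (Eventually.of_forall (abs_sg u v τ))
      have I2 : Integrable fun x => |u x (t - z) - v x (t - z)| * φ x :=
        (cz.abs.mul hφ.continuous).integrable_of_hasCompactSupport hc.mul_left
      have e1 : ∫ x, sg u v τ x * ((u x τ - v x τ) * φ x) = h τ := by
        simp only [hh, ← sg_mul u v τ, mul_assoc]
      have e2 : ∫ x, sg u v τ x * ((u x (t - z) - v x (t - z)) * φ x) ≤ h (t - z) := by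
        refine integral_mono I1 I2 fun x => ?_
        simp only [← mul_assoc]
        refine mul_le_mul_of_nonneg_right ?_ (h0 x)
        refine (le_abs_self _).trans ?_
        rw [abs_mul]
        exact mul_le_of_le_one_left (abs_nonneg _) (abs_sg u v τ x)
      simp only [Pi.neg_apply, Function.comp, ← hτdef]
      linarith)
    (by simp)
    (by
      intro s hs
      have hτ : t - s ∈ Set.Ioo (0 : ℝ) T := ⟨by linarith [hs.2], by linarith [hs.1, ht.2]⟩
      have := deriv_bound hm0 hm1 hκ hu hv hφ hc h0 hg hgκ H hτ
      simp only [hh]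
      linarith)
    t ⟨ht.1, le_rfl⟩
  rw [gronwallBound_of_K_ne_0 (neg_ne_zero.2 hκ.ne')] at G
  simp only [sub_self, sub_zero] at G
  have : κ / -κ = -1 := by rw [div_neg, div_self hκ.ne']
  rw [this] at G
  show h t * _ ≤ h 0 + 1 - _
  linarith

/-! ### Contraction in `L¹` -/

/-- If the initial values of two solutions differ by a compactly supported L¹
function f, then the difference stays in L¹ for all times, with the L¹ norm uniformly
bounded in t by a constant depending only on T, ‖f‖_{L¹} and the (radius of the) support
of f. -/
theorem difference_stays_integrable (N : ℕ) (hN : 3 ≤ N) (m : ℝ)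
    (hm0 : 0 < m) (hm1 : m < ((N : ℝ) - 2) / N) :
    ∃ C : ℝ → ℝ → ℝ → ℝ,
      ∀ (T : ℝ), 0 < T →
      ∀ (u v : Euc N → ℝ → ℝ) (u₀ v₀ : Euc N → ℝ) (R : ℝ),
        IsFDESol N m T u u₀ → IsFDESol N m T v v₀ →
        Integrable (fun x => u₀ x - v₀ x) volume →
        Function.support (fun x => u₀ x - v₀ x) ⊆ Metric.closedBall 0 R →
        (∀ t ∈ Set.Ico (0:ℝ) T, Integrable (fun x => u x t - v x t) volume) ∧
        (∀ t ∈ Set.Ico (0:ℝ) T,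
          (∫ x, |u x t - v x t|) ≤ C T (∫ x, |u₀ x - v₀ x|) R) := by
  -- the difference is in fact an `L¹` contraction
  refine ⟨fun _ F _ => F, fun T hT u v u₀ v₀ R hu hv hf _ => ?_⟩
  have hm1' : m < 1 := by
    have : (0 : ℝ) < N := by exact_mod_cast (by omega : 0 < N)
    refine hm1.trans ?_
    rw [div_lt_one this]
    linarith
  -- on a fixed ball, `κ → 0` in the weighted bound removes the test function and all error terms
  have ball_bound : ∀ t ∈ Set.Ico (0 : ℝ) T, ∀ r : ℝ,
      ∫ x in Metric.closedBall 0 r, |u x t - v x t| ≤ ∫ x, |u₀ x - v₀ x| := by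
    intro t ht r
    set F := ∫ x, |u₀ x - v₀ x| with hF
    set J := ∫ x in Metric.closedBall 0 r, |u x t - v x t| with hJ
    have cw : Continuous fun x => |u x t - v x t| :=
      ((sol_continuous hu ht).sub (sol_continuous hv ht)).abs
    have step : ∀ κ : ℝ, 0 < κ → (1 - κ) * J * exp (-κ * t) ≤ F + 1 - exp (-κ * t) := by
      intro κ hκ
      obtain ⟨n, rfl⟩ : ∃ n, N = n + 2 := ⟨N - 2, by omega⟩
      obtain ⟨φ, g, hφ, hc, h0, h1, hr, hg, hgκ, H⟩ :=
        exists_test n (by omega) hm0 hm1' hκ r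
      have W := weighted_bound hm0 hm1' hκ hu hv hφ hc h0 hg hgκ H ht
      have I : Integrable fun x => |u x t - v x t| * φ x :=
        (cw.mul hφ.continuous).integrable_of_hasCompactSupport hc.mul_left
      have a1 : (1 - κ) * J ≤ ∫ x, |u x t - v x t| * φ x := by
        rw [hJ, ← integral_const_mul]
        refine (setIntegral_mono_on ?_ I.integrableOn Metric.isClosed_closedBall.measurableSet
          fun x hx => ?_).trans (setIntegral_le_integral I (Eventually.of_forall fun x =>
            mul_nonneg (abs_nonneg _) (h0 x)))
        · exact (cw.const_mul _).continuousOn.integrableOn_compact (isCompact_closedBall _ _)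
        · rw [mul_comm]
          exact mul_le_mul_of_nonneg_left (hr x (by simpa using hx)) (abs_nonneg _)
      have a2 : ∫ x, |u x 0 - v x 0| * φ x ≤ F := by
        simp only [hu.2.2.2.1, hv.2.2.2.1]
        refine integral_mono_of_nonneg (Eventually.of_forall fun x =>
            mul_nonneg (abs_nonneg _) (h0 x)) hf.abs (Eventually.of_forall fun x =>
            mul_le_of_le_one_right (abs_nonneg _) (h1 x))
      have := mul_le_mul_of_nonneg_right a1 (exp_pos (-κ * t)).le
      linarith
    have L : Tendsto (fun κ : ℝ => (1 - κ) * J * exp (-κ * t)) (𝓝[>] 0) (𝓝 J) := by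
      have : Continuous fun κ : ℝ => (1 - κ) * J * exp (-κ * t) := by fun_prop
      simpa using (this.tendsto 0).mono_left (nhdsWithin_le_nhds (s := Set.Ioi 0))
    have L' : Tendsto (fun κ : ℝ => F + 1 - exp (-κ * t)) (𝓝[>] 0) (𝓝 F) := by
      have : Continuous fun κ : ℝ => F + 1 - exp (-κ * t) := by fun_prop
      simpa using (this.tendsto 0).mono_left (nhdsWithin_le_nhds (s := Set.Ioi 0))
    refine le_of_tendsto_of_tendsto L L' ?_
    filter_upwards [self_mem_nhdsWithin] with κ hκ using step κ hκ
  have cover : AECover (volume : Measure (Euc N)) atTop fun r : ℝ => Metric.closedBall 0 r :=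
    aecover_closedBall tendsto_id
  have integ : ∀ t ∈ Set.Ico (0 : ℝ) T, Integrable (fun x => u x t - v x t) volume := by
    intro t ht
    have cw := (sol_continuous hu ht).sub (sol_continuous hv ht)
    refine cover.integrable_of_integral_norm_bounded (∫ x, |u₀ x - v₀ x|)
      (fun r => cw.continuousOn.integrableOn_compact (isCompact_closedBall _ _))
      (Eventually.of_forall fun r => ball_bound t ht r)
  refine ⟨integ, fun t ht => ?_⟩
  exact le_of_tendsto (cover.integral_tendsto_of_countably_generated (integ t ht).abs)
    (Eventually.of_forall fun r => ball_bound t ht r)
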